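/- arXiv:1311.2171 — 4 statements merged into one kernel-verified Lean document; each statement's English description precedes it below -/
import Mathlib

section
/- Let σ_1,…,σ_n : Ω → H be a holomorphic frame and let A : Ω → M_n(ℂ) be holomorphic. Define the transformed frame σ̃_j(z) := Σ_{i=1}^n A_{ij}(z)·σ_i(z) for 1 ≤ j ≤ n, and let J_k h̃(z) denote the jet Gram matrix built from (σ̃_1,…,σ̃_n) in the same way that J_k h(z) is built from (σ_1,…,σ_n). Then for every z ∈ Ω and every k ≥ 0, J_k h̃(z) = J_k(A)(z)* · J_k h(z) · J_k(A)(z), where * denotes conjugate transpose. -/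
open Matrix

noncomputable section

/-- `jetA k A z` is the paper's matrix `J_k(A)(z)`: in `(k+1)×(k+1)` blocks of size `n×n`, the
`(i,j)` block is `binom(j,i)·A^{(j−i)}(z)` for `i ≤ j` and `0` otherwise. -/
def jetA {n : ℕ} (k : ℕ) (A : ℂ → Matrix (Fin n) (Fin n) ℂ) (z : ℂ) :
    Matrix (Fin (k + 1) × Fin n) (Fin (k + 1) × Fin n) ℂ :=
  Matrix.of fun p q =>
    if (p.1 : ℕ) ≤ (q.1 : ℕ) then
      ((q.1 : ℕ).choose (p.1 : ℕ) : ℂ) *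
        iteratedDeriv ((q.1 : ℕ) - (p.1 : ℕ)) (fun w => A w p.2 q.2) z
    else 0

variable {H : Type*} [NormedAddCommGroup H] [InnerProductSpace ℂ H] [CompleteSpace H]

/-- `⟪x, y⟫` is the Mathlib inner product (conjugate-linear in the first argument);
it equals the paper's inner product `⟨y, x⟩`, which is linear in the first argument. -/
local notation "⟪" x ", " y "⟫" => (inner ℂ x y : ℂ)

/-- `jGram σ N z` is the Gram matrix of the family
`(σ_1(z),…,σ_n(z), σ_1′(z),…,σ_n′(z),…,σ_1^{(N−1)}(z),…,σ_n^{(N−1)}(z))`, with `(a,b)` entry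
equal to `⟨b-th vector, a-th vector⟩_paper = ⟪a-th vector, b-th vector⟫`.  The jet Gram matrix
`J_k h` of the paper is `jGram σ (k+1)`. -/
def jGram {n : ℕ} (σ : Fin n → ℂ → H) (N : ℕ) (z : ℂ) :
    Matrix (Fin N × Fin n) (Fin N × Fin n) ℂ :=
  Matrix.of fun p q =>
    ⟪iteratedDeriv (p.1 : ℕ) (σ p.2) z, iteratedDeriv (q.1 : ℕ) (σ q.2) z⟫

/-- `hMat σ m z` is the paper's matrix `h_m(z)`: its `(i,j)` entry is the determinant of the
`(nm+1)×(nm+1)` matrix whose `(a,b)` entry is `⟨u_b, v_a⟩_paper = ⟪v_a, u_b⟫`, where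
`u` is the family `(σ_1(z),…,σ_n^{(m−1)}(z))` followed by `σ_j^{(m)}(z)` and `v` is the same
family followed by `σ_i^{(m)}(z)`.  (For `m = 0` this is the Gram matrix `h_0 = J_0 h`.) -/
def hMat {n : ℕ} (σ : Fin n → ℂ → H) (m : ℕ) (z : ℂ) : Matrix (Fin n) (Fin n) ℂ :=
  Matrix.of fun i j =>
    (Matrix.of fun a b : (Fin m × Fin n) ⊕ Unit =>
      ⟪Sum.elim (fun lp : Fin m × Fin n => iteratedDeriv (lp.1 : ℕ) (σ lp.2) z)
          (fun _ => iteratedDeriv m (σ i) z) a,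
        Sum.elim (fun lp : Fin m × Fin n => iteratedDeriv (lp.1 : ℕ) (σ lp.2) z)
          (fun _ => iteratedDeriv m (σ j) z) b⟫).det

/-
Since `binom(m, r) = 0` for `r > m`, the Leibniz rule for `A_{ij} • σ_i` says that the jets of the
transformed frame are the combinations of the jets of `σ` with coefficients the columns of
`J_k(A)(z)`. A family `w_q = ∑ p, P_{pq} • v_p` has Gram matrix `P* G P`, where `G` is the Gram
matrix of `v`.
-/

section Leibniz

variable {𝕜 𝔸 F : Type*} [NontriviallyNormedField 𝕜] [NormedRing 𝔸] [NormedAlgebra 𝕜 𝔸]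
  [NormedAddCommGroup F] [NormedSpace 𝕜 F] [Module 𝔸 F] [IsBoundedSMul 𝔸 F] [IsScalarTower 𝕜 𝔸 F]
  {f : 𝕜 → 𝔸} {g : 𝕜 → F} {x : 𝕜} {m : ℕ}

theorem iteratedDeriv_smul (hf : ContDiffAt 𝕜 m f x) (hg : ContDiffAt 𝕜 m g x) :
    iteratedDeriv m (f • g) x = ∑ r ∈ Finset.range (m + 1),
      m.choose r • iteratedDeriv r f x • iteratedDeriv (m - r) g x := by
  simpa only [iteratedDerivWithin_univ] using iteratedDerivWithin_smul
    (Set.mem_univ x) uniqueDiffOn_univ hf.contDiffWithinAt hg.contDiffWithinAt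

theorem iteratedDeriv_smul_flip (hf : ContDiffAt 𝕜 m f x) (hg : ContDiffAt 𝕜 m g x) :
    iteratedDeriv m (f • g) x = ∑ r ∈ Finset.range (m + 1),
      m.choose r • iteratedDeriv (m - r) f x • iteratedDeriv r g x := by
  rw [iteratedDeriv_smul hf hg, ← Finset.sum_flip]
  refine Finset.sum_congr rfl fun r hr => ?_
  have hrm : r ≤ m := Finset.mem_range_succ_iff.mp hr
  rw [Nat.choose_symm hrm, Nat.sub_sub_self hrm]

theorem iteratedDeriv_smul_eq_sum_fin {N : ℕ} (hmN : m < N) (hf : ContDiffAt 𝕜 m f x)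
    (hg : ContDiffAt 𝕜 m g x) :
    iteratedDeriv m (f • g) x = ∑ r : Fin N,
      ((m.choose r : 𝔸) * iteratedDeriv (m - r) f x) • iteratedDeriv (r : ℕ) g x := by
  simp only [mul_smul, Nat.cast_smul_eq_nsmul]
  rw [iteratedDeriv_smul_flip hf hg, Fin.sum_univ_eq_sum_range
    (fun r => m.choose r • iteratedDeriv (m - r) f x • iteratedDeriv r g x) N]
  refine Finset.sum_subset (Finset.range_subset_range.mpr hmN) fun r _ hr => ?_
  have hmr : m < r := by simpa using hr
  rw [Nat.choose_eq_zero_of_lt hmr, zero_smul]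

end Leibniz

theorem gram_sum_smul {𝕜 E ι κ : Type*} [RCLike 𝕜] [SeminormedAddCommGroup E]
    [InnerProductSpace 𝕜 E] [Fintype ι] (v : ι → E) (P : Matrix ι κ 𝕜) :
    gram 𝕜 (fun q => ∑ p, P p q • v p) = Pᴴ * gram 𝕜 v * P := by
  ext q r
  rw [Matrix.mul_assoc]
  exact (star_dotProduct_gram_mulVec v (P.col q) (P.col r)).symm

theorem jetA_apply {n k : ℕ} (A : ℂ → Matrix (Fin n) (Fin n) ℂ) (z : ℂ)
    (p q : Fin (k + 1) × Fin n) :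
    jetA k A z p q = ((q.1 : ℕ).choose (p.1 : ℕ) : ℂ) *
      iteratedDeriv ((q.1 : ℕ) - (p.1 : ℕ)) (fun w => A w p.2 q.2) z := by
  rw [jetA, Matrix.of_apply, ite_eq_left_iff, not_le]
  intro hqp
  rw [Nat.choose_eq_zero_of_lt hqp, Nat.cast_zero, zero_mul]

theorem iteratedDeriv_sum_smul_eq_sum_jetA {E : Type*} [NormedAddCommGroup E] [NormedSpace ℂ E]
    {n k : ℕ} {σ : Fin n → ℂ → E} {A : ℂ → Matrix (Fin n) (Fin n) ℂ} {z : ℂ}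
    (hσ : ∀ i, ContDiffAt ℂ k (σ i) z) (hA : ∀ i j, ContDiffAt ℂ k (fun w => A w i j) z)
    (q : Fin (k + 1) × Fin n) :
    iteratedDeriv (q.1 : ℕ) (fun w => ∑ i, A w i q.2 • σ i w) z =
      ∑ p, jetA k A z p q • iteratedDeriv (p.1 : ℕ) (σ p.2) z := by
  have hqk : ((q.1 : ℕ) : WithTop ℕ∞) ≤ k := by exact_mod_cast q.1.is_le
  have hσq := fun i => (hσ i).of_le hqk
  have hAq := fun i => (hA i q.2).of_le hqk
  calc iteratedDeriv (q.1 : ℕ) (fun w => ∑ i, A w i q.2 • σ i w) z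
    _ = ∑ i, iteratedDeriv (q.1 : ℕ) ((fun w => A w i q.2) • σ i) z :=
      iteratedDeriv_fun_sum fun i _ => (hAq i).smul (hσq i)
    _ = ∑ i, ∑ r : Fin (k + 1), jetA k A z (r, i) q • iteratedDeriv (r : ℕ) (σ i) z :=
      Finset.sum_congr rfl fun i _ => by
        simp only [iteratedDeriv_smul_eq_sum_fin q.1.is_lt (hAq i) (hσq i), jetA_apply]
    _ = ∑ p, jetA k A z p q • iteratedDeriv (p.1 : ℕ) (σ p.2) z := by
      rw [Fintype.sum_prod_type_right]

section JetGram

variable {E : Type*} [NormedAddCommGroup E] [InnerProductSpace ℂ E] {n : ℕ}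

theorem jGram_eq_gram (σ : Fin n → ℂ → E) (N : ℕ) (z : ℂ) :
    jGram σ N z = gram ℂ (fun p : Fin N × Fin n => iteratedDeriv (p.1 : ℕ) (σ p.2) z) :=
  rfl

theorem stmt3_general {k : ℕ} {σ : Fin n → ℂ → E} {A : ℂ → Matrix (Fin n) (Fin n) ℂ} {z : ℂ}
    (hσ : ∀ i, ContDiffAt ℂ k (σ i) z) (hA : ∀ i j, ContDiffAt ℂ k (fun w => A w i j) z) :
    jGram (fun j w => ∑ i, A w i j • σ i w) (k + 1) z =
      (jetA k A z)ᴴ * jGram σ (k + 1) z * jetA k A z := by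
  simp only [jGram_eq_gram, iteratedDeriv_sum_smul_eq_sum_jetA hσ hA, gram_sum_smul]

end JetGram

/-- Transformation rule of the jet Gram matrix under a holomorphic change of frame:
if `σ̃_j = Σ_i A_{ij}·σ_i`, then `J_k h̃(z) = J_k(A)(z)* · J_k h(z) · J_k(A)(z)`
for every `z ∈ Ω` and every `k ≥ 0`. -/
theorem stmt3 {n : ℕ} (Ω : Set ℂ) (hΩ : IsOpen Ω)
    (σ : Fin n → ℂ → H) (hσ : ∀ i, DifferentiableOn ℂ (σ i) Ω)
    (A : ℂ → Matrix (Fin n) (Fin n) ℂ)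
    (hA : ∀ i j, DifferentiableOn ℂ (fun z => A z i j) Ω) :
    ∀ z ∈ Ω, ∀ k : ℕ,
      jGram (fun j w => ∑ i, A w i j • σ i w) (k + 1) z =
        (jetA k A z)ᴴ * jGram σ (k + 1) z * jetA k A z :=
  fun _ hz _ => stmt3_general (fun i => ((hσ i).analyticAt (hΩ.mem_nhds hz)).contDiffAt)
    fun i j => ((hA i j).analyticAt (hΩ.mem_nhds hz)).contDiffAt
end
end

section
/- Let σ : Ω → H be holomorphic and k ≥ 0, and set D(z) := det G_k(z). Then D is smooth on Ω and, indexing the rows and columns of the (k+2)×(k+2) matrix G_{k+1}(z) by 0,…,k+1, the following hold for every z ∈ Ω: (i) ∂D/∂z(z) equals the determinant of the matrix obtained from G_{k+1}(z) by deleting the row of index k+1 and the column of index k; (ii) ∂D/∂z̄(z) equals the determinant of the matrix obtained from G_{k+1}(z) by deleting the row of index k and the column of index k+1; (iii) ∂²D/∂z∂z̄(z) equals the determinant of the matrix obtained from G_{k+1}(z) by deleting the row of index k and the column of index k. -/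
open Matrix

noncomputable section

/-- Wirtinger derivative `∂g/∂z := (1/2)(∂g/∂x − i·∂g/∂y)`. -/
def Dz {E : Type*} [NormedAddCommGroup E] [NormedSpace ℂ E] (g : ℂ → E) (z : ℂ) : E :=
  (1 / 2 : ℂ) • (fderiv ℝ g z 1 - Complex.I • fderiv ℝ g z Complex.I)

/-- Wirtinger derivative `∂g/∂z̄ := (1/2)(∂g/∂x + i·∂g/∂y)`. -/
def Dzbar {E : Type*} [NormedAddCommGroup E] [NormedSpace ℂ E] (g : ℂ → E) (z : ℂ) : E :=
  (1 / 2 : ℂ) • (fderiv ℝ g z 1 + Complex.I • fderiv ℝ g z Complex.I)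

/-- Entrywise Wirtinger derivative `∂/∂z` of a matrix-valued function. -/
def mDz {ι : Type*} (M : ℂ → Matrix ι ι ℂ) (z : ℂ) : Matrix ι ι ℂ :=
  Matrix.of fun i j => Dz (fun w => M w i j) z

/-- Entrywise Wirtinger derivative `∂/∂z̄` of a matrix-valued function. -/
def mDzbar {ι : Type*} (M : ℂ → Matrix ι ι ℂ) (z : ℂ) : Matrix ι ι ℂ :=
  Matrix.of fun i j => Dzbar (fun w => M w i j) z

variable {H : Type*} [NormedAddCommGroup H] [InnerProductSpace ℂ H] [CompleteSpace H]

/-- `⟪x, y⟫` is the Mathlib inner product (conjugate-linear in the first argument);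
it equals the paper's inner product `⟨y, x⟩`, which is linear in the first argument. -/
local notation "⟪" x ", " y "⟫" => (inner ℂ x y : ℂ)

/-- `lG σ N z` is the `N×N` Gram matrix of `σ(z), σ′(z), …, σ^{(N−1)}(z)`; its `(i,j)` entry is
`⟪σ^{(i)}(z), σ^{(j)}(z)⟫ = ⟨σ^{(j)}(z), σ^{(i)}(z)⟩_paper`.  The jet Gram matrix `G_k` of the
paper is `lG σ (k+1)`. -/
def lG (σ : ℂ → H) (N : ℕ) (z : ℂ) : Matrix (Fin N) (Fin N) ℂ :=
  Matrix.of fun i j => ⟪iteratedDeriv (i : ℕ) σ z, iteratedDeriv (j : ℕ) σ z⟫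

/-!
Write `D = det ⟪σ⁽ⁱ⁾, σ⁽ʲ⁾⟫`. The rows are antiholomorphic and the columns holomorphic in `z`, so
`∂/∂z` acts by the Leibniz rule on the columns only, raising one order of differentiation at a
time. As the orders `0, …, k` are consecutive, raising any order but the last repeats a column, and
the only surviving term has orders `0, …, k - 1, k + 1`. Complex conjugation exchanges rows and
columns, which gives `∂/∂z̄`. Each rule leaves the other family of vectors arbitrary, so they can be
composed.
-/

open Filter Topology ComplexConjugate

section Determinant

variable {n R : Type*} [Fintype n] [DecidableEq n]

theorem sum_det_updateCol_succ [CommRing R] {k : ℕ} (A : Matrix (Fin (k + 1)) (Fin (k + 2)) R) :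
    ∑ j, ((A.submatrix id Fin.castSucc).updateCol j fun i => A i j.succ).det =
      (A.submatrix id (Fin.last k).castSucc.succAbove).det := by
  have hrepeat (j : Fin k) : ((A.submatrix id Fin.castSucc).updateCol j.castSucc
      fun i => A i j.castSucc.succ).det = 0 :=
    det_zero_of_column_eq j.castSucc_lt_succ.ne fun i => by
      rw [updateCol_self, updateCol_ne j.castSucc_lt_succ.ne', Fin.succ_castSucc]
      rfl
  have hlast : (A.submatrix id Fin.castSucc).updateCol (Fin.last k)
      (fun i => A i (Fin.last k).succ) = A.submatrix id (Fin.last k).castSucc.succAbove := by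
    ext i j
    induction j using Fin.lastCases with
    | last => simp
    | cast j =>
      rw [updateCol_ne (Fin.castSucc_lt_last j).ne, submatrix_apply, submatrix_apply,
        Fin.succAbove_castSucc_of_lt _ _ (Fin.castSucc_lt_last j)]
  rw [Fin.sum_univ_castSucc, hlast, Finset.sum_eq_zero fun j _ => hrepeat j, zero_add]

variable {𝕜 F : Type*} [NontriviallyNormedField 𝕜] [NormedAddCommGroup F] [NormedSpace 𝕜 F]
  [NormedCommRing R] [NormedAlgebra 𝕜 R] {M : F → Matrix n n R}

theorem fderiv_matrix_det_apply {z : F} (hM : ∀ i j, DifferentiableAt 𝕜 (fun w => M w i j) z)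
    (v : F) :
    fderiv 𝕜 (fun w => (M w).det) z v =
      ∑ j, ((M z).updateCol j fun i => fderiv 𝕜 (fun w => M w i j) z v).det := by
  let detMultilinear : ContinuousMultilinearMap 𝕜 (fun _ : n => n → R) R :=
    { (detRowAlternating (n := n) (R := R)).toMultilinearMap.restrictScalars 𝕜 with
      cont := Continuous.matrix_det continuous_id }
  have hcol (j : n) : HasFDerivAt (fun w => (M w)ᵀ j)
      (ContinuousLinearMap.pi fun i => fderiv 𝕜 (fun w => M w i j) z) z :=
    hasFDerivAt_pi.2 fun i => (hM i j).hasFDerivAt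
  have hdet := HasFDerivAt.multilinear_comp detMultilinear hcol
  simp only [← det_transpose (M _), ← det_transpose (updateCol _ _ _), ← updateRow_transpose]
  change fderiv 𝕜 (fun w => detMultilinear fun j => (M w)ᵀ j) z v = _
  rw [hdet.fderiv, _root_.sum_apply]
  rfl

theorem contDiffOn_matrix_det {s : Set F} {r : WithTop ℕ∞}
    (hM : ∀ i j, ContDiffOn 𝕜 r (fun w => M w i j) s) :
    ContDiffOn 𝕜 r (fun w => (M w).det) s := by
  simp only [det_apply']
  exact ContDiffOn.sum fun p _ => contDiffOn_const.mul (contDiffOn_prod fun i _ => hM (p i) i)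

end Determinant

section Wirtinger

variable {z : ℂ}

theorem Dzbar_congr_of_eventuallyEq {E : Type*} [NormedAddCommGroup E] [NormedSpace ℂ E]
    {f g : ℂ → E} (h : f =ᶠ[𝓝 z] g) : Dzbar f z = Dzbar g z := by
  simp only [Dzbar, h.fderiv_eq]

theorem Dzbar_star {E : Type*} [NormedAddCommGroup E] [NormedSpace ℂ E] [StarAddMonoid E]
    [StarModule ℂ E] [ContinuousStar E] (f : ℂ → E) :
    Dzbar (fun w => star (f w)) z = star (Dz f z) := by
  simp [Dz, Dzbar, fderiv_star, star_smul, sub_eq_add_neg]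

theorem Dz_matrix_det {n : Type*} [Fintype n] [DecidableEq n] {M : ℂ → Matrix n n ℂ}
    (hM : ∀ i j, DifferentiableAt ℝ (fun w => M w i j) z) :
    Dz (fun w => (M w).det) z = ∑ j, ((M z).updateCol j fun i => mDz M z i j).det := by
  have hcol (j : n) : (fun i => mDz M z i j) =
      (1 / 2 : ℂ) • ((fun i => fderiv ℝ (fun w => M w i j) z 1) +
        (-Complex.I) • fun i => fderiv ℝ (fun w => M w i j) z Complex.I) := by
    ext i
    simp [mDz, Dz, sub_eq_add_neg]
  simp only [hcol, det_updateCol_smul, det_updateCol_add, Dz, fderiv_matrix_det_apply hM,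
    ← Finset.mul_sum, Finset.sum_add_distrib, smul_eq_mul]
  ring

variable {E : Type*} [NormedAddCommGroup E] [InnerProductSpace ℂ E] {f g : ℂ → E}

theorem fderiv_inner_apply_of_differentiableAt_complex (hf : DifferentiableAt ℂ f z)
    (hg : DifferentiableAt ℂ g z) (v : ℂ) :
    fderiv ℝ (fun w => ⟪f w, g w⟫) z v = v * ⟪f z, deriv g z⟫ + conj v * ⟪deriv f z, g z⟫ := by
  have hreal {h : ℂ → E} (hh : DifferentiableAt ℂ h z) : fderiv ℝ h z v = v • deriv h z := by
    rw [hh.fderiv_restrictScalars ℝ, ContinuousLinearMap.coe_restrictScalars',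
      fderiv_eq_smul_deriv]
  rw [fderiv_inner_apply ℂ (hf.restrictScalars ℝ) (hg.restrictScalars ℝ), hreal hf, hreal hg,
    inner_smul_left, inner_smul_right]

theorem Dz_inner (hf : DifferentiableAt ℂ f z) (hg : DifferentiableAt ℂ g z) :
    Dz (fun w => ⟪f w, g w⟫) z = ⟪f z, deriv g z⟫ := by
  simp only [Dz, fderiv_inner_apply_of_differentiableAt_complex hf hg, Complex.conj_I, map_one,
    smul_eq_mul]
  linear_combination (-(1 / 2) * ⟪f z, deriv g z⟫ + 1 / 2 * ⟪deriv f z, g z⟫) * Complex.I_mul_I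

end Wirtinger

/-- The cross-Gram matrix `⟪x i, y j⟫` of two families, generalizing `Matrix.gram`, which is the
case `x = y`. Two families are needed because `∂/∂z` changes only `y` and `∂/∂z̄` only `x`. -/
def crossGram (𝕜 : Type*) {E m n : Type*} [Inner 𝕜 E] (x : m → E) (y : n → E) : Matrix m n 𝕜 :=
  Matrix.of fun i j => inner 𝕜 (x i) (y j)

section CrossGram

theorem crossGram_submatrix {𝕜 E l m n o : Type*} [Inner 𝕜 E] (x : m → E) (y : n → E)
    (p : l → m) (q : o → n) : (crossGram 𝕜 x y).submatrix p q = crossGram 𝕜 (x ∘ p) (y ∘ q) :=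
  rfl

theorem star_det_crossGram {𝕜 E n : Type*} [RCLike 𝕜] [SeminormedAddCommGroup E]
    [InnerProductSpace 𝕜 E] [Fintype n] [DecidableEq n] (x y : n → E) :
    star (crossGram 𝕜 x y).det = (crossGram 𝕜 y x).det := by
  rw [← det_conjTranspose]
  congr 1
  ext i j
  exact inner_conj_symm _ _

variable {E n : Type*} [NormedAddCommGroup E] [InnerProductSpace ℂ E] [Fintype n] [DecidableEq n]

theorem Dz_det_crossGram {F G : ℂ → n → E} {z : ℂ} (hF : DifferentiableAt ℂ F z)
    (hG : DifferentiableAt ℂ G z) :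
    Dz (fun w => (crossGram ℂ (F w) (G w)).det) z =
      ∑ j, ((crossGram ℂ (F z) (G z)).updateCol j fun i => ⟪F z i, deriv G z j⟫).det := by
  have hFi := differentiableAt_pi.1 hF
  have hGj := differentiableAt_pi.1 hG
  have hentry (i j : n) : mDz (fun w => crossGram ℂ (F w) (G w)) z i j = ⟪F z i, deriv G z j⟫ := by
    rw [deriv_pi hGj]
    exact Dz_inner (hFi i) (hGj j)
  have hdiff (i j : n) : DifferentiableAt ℝ (fun w => crossGram ℂ (F w) (G w) i j) z :=
    ((hFi i).restrictScalars ℝ).inner ℂ ((hGj j).restrictScalars ℝ)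
  simp only [Dz_matrix_det hdiff, hentry]

theorem contDiffOn_det_crossGram {V : Type*} [NormedAddCommGroup V] [NormedSpace ℝ V] {s : Set V}
    {r : WithTop ℕ∞} {F G : V → n → E} (hF : ContDiffOn ℝ r F s) (hG : ContDiffOn ℝ r G s) :
    ContDiffOn ℝ r (fun w => (crossGram ℂ (F w) (G w)).det) s :=
  contDiffOn_matrix_det fun i j => (contDiffOn_pi.1 hF i).inner ℂ (contDiffOn_pi.1 hG j)

end CrossGram

/-- The jet `(σ(z), σ′(z), …, σ^{(N-1)}(z))` of `σ` at `z`, truncated to its first `N` entries as in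
`lG σ N`, which is the Gram matrix of this family. -/
def jet {𝕜 E : Type*} [NontriviallyNormedField 𝕜] [NormedAddCommGroup E] [NormedSpace 𝕜 E]
    (σ : 𝕜 → E) (N : ℕ) (z : 𝕜) : Fin N → E :=
  fun j => iteratedDeriv j σ z

section Jet

theorem jet_succ_comp_castSucc {𝕜 E : Type*} [NontriviallyNormedField 𝕜] [NormedAddCommGroup E]
    [NormedSpace 𝕜 E] (σ : 𝕜 → E) (N : ℕ) (z : 𝕜) :
    jet σ (N + 1) z ∘ Fin.castSucc = jet σ N z :=
  rfl

theorem deriv_jet_apply {𝕜 E : Type*} [NontriviallyNormedField 𝕜] [NormedAddCommGroup E]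
    [NormedSpace 𝕜 E] {σ : 𝕜 → E} {N : ℕ} {z : 𝕜} (hσ : DifferentiableAt 𝕜 (jet σ N) z)
    (j : Fin N) : deriv (jet σ N) z j = jet σ (N + 1) z j.succ := by
  rw [deriv_pi (differentiableAt_pi.1 hσ)]
  simp only [jet, Fin.val_succ, iteratedDeriv_succ]

theorem differentiableOn_jet {E : Type*} [NormedAddCommGroup E] [NormedSpace ℂ E]
    [CompleteSpace E] {σ : ℂ → E} {Ω : Set ℂ} (hσ : DifferentiableOn ℂ σ Ω) (hΩ : IsOpen Ω)
    (N : ℕ) : DifferentiableOn ℂ (jet σ N) Ω := by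
  refine differentiableOn_pi.2 fun j => ?_
  simp only [jet, iteratedDeriv_eq_iterate]
  exact ((hσ.analyticOnNhd hΩ).iterated_deriv j).differentiableOn

variable {E : Type*} [NormedAddCommGroup E] [InnerProductSpace ℂ E] {σ : ℂ → E} {k : ℕ} {z : ℂ}
  {F : ℂ → Fin (k + 1) → E}

theorem Dz_det_crossGram_jet (hF : DifferentiableAt ℂ F z)
    (hσ : DifferentiableAt ℂ (jet σ (k + 1)) z) :
    Dz (fun w => (crossGram ℂ (F w) (jet σ (k + 1) w)).det) z =
      (crossGram ℂ (F z) (jet σ (k + 2) z ∘ (Fin.last k).castSucc.succAbove)).det := by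
  simp only [Dz_det_crossGram hF hσ, deriv_jet_apply hσ]
  exact sum_det_updateCol_succ (crossGram ℂ (F z) (jet σ (k + 2) z))

theorem Dzbar_det_crossGram_jet (hσ : DifferentiableAt ℂ (jet σ (k + 1)) z)
    (hF : DifferentiableAt ℂ F z) :
    Dzbar (fun w => (crossGram ℂ (jet σ (k + 1) w) (F w)).det) z =
      (crossGram ℂ (jet σ (k + 2) z ∘ (Fin.last k).castSucc.succAbove) (F z)).det := by
  simp only [← star_det_crossGram (F _)]
  rw [Dzbar_star, Dz_det_crossGram_jet hF hσ]

end Jet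

/-- For `σ : Ω → H` holomorphic and `D(z) := det G_k(z)` (where `G_k = lG σ (k+1)`), `D` is
smooth on `Ω` and, indexing rows and columns of the `(k+2)×(k+2)` matrix `G_{k+1}(z)` by
`0,…,k+1`:
(i) `∂D/∂z` is the determinant of `G_{k+1}(z)` with the row of index `k+1` and the column of
index `k` deleted;
(ii) `∂D/∂z̄` is the determinant of `G_{k+1}(z)` with the row of index `k` and the column of
index `k+1` deleted;
(iii) `∂²D/∂z∂z̄` is the determinant of `G_{k+1}(z)` with the row of index `k` and the column
of index `k` deleted. -/
theorem stmt4 (Ω : Set ℂ) (hΩ : IsOpen Ω) (σ : ℂ → H)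
    (hσ : DifferentiableOn ℂ σ Ω) (k : ℕ) :
    ContDiffOn ℝ (⊤ : ℕ∞) (fun z => (lG σ (k + 1) z).det) Ω ∧
    ∀ z ∈ Ω,
      Dz (fun w => (lG σ (k + 1) w).det) z =
        ((lG σ (k + 2) z).submatrix (Fin.last (k + 1)).succAbove
          ((Fin.last k).castSucc : Fin (k + 2)).succAbove).det ∧
      Dzbar (fun w => (lG σ (k + 1) w).det) z =
        ((lG σ (k + 2) z).submatrix ((Fin.last k).castSucc : Fin (k + 2)).succAbove
          (Fin.last (k + 1)).succAbove).det ∧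
      Dzbar (fun w => Dz (fun u => (lG σ (k + 1) u).det) w) z =
        ((lG σ (k + 2) z).submatrix ((Fin.last k).castSucc : Fin (k + 2)).succAbove
          ((Fin.last k).castSucc : Fin (k + 2)).succAbove).det := by
  have hlG (N : ℕ) (w : ℂ) : lG σ N w = crossGram ℂ (jet σ N w) (jet σ N w) := rfl
  have hjet (N : ℕ) {w : ℂ} (hw : w ∈ Ω) : DifferentiableAt ℂ (jet σ N) w :=
    (differentiableOn_jet hσ hΩ N).differentiableAt (hΩ.mem_nhds hw)
  have hsmooth : ContDiffOn ℝ (⊤ : ℕ∞) (jet σ (k + 1)) Ω :=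
    ((differentiableOn_jet hσ hΩ (k + 1)).contDiffOn hΩ).restrict_scalars ℝ
  simp only [hlG, crossGram_submatrix, Fin.succAbove_last, jet_succ_comp_castSucc]
  refine ⟨contDiffOn_det_crossGram hsmooth hsmooth, fun z hz =>
    ⟨Dz_det_crossGram_jet (hjet _ hz) (hjet _ hz),
      Dzbar_det_crossGram_jet (hjet _ hz) (hjet _ hz), ?_⟩⟩
  have hDz := (hΩ.eventually_mem hz).mono fun w hw =>
    Dz_det_crossGram_jet (hjet (k + 1) hw) (hjet (k + 1) hw)
  rw [Dzbar_congr_of_eventuallyEq hDz]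
  have hcomp (p : Fin (k + 1) → Fin (k + 2)) :
      DifferentiableAt ℂ (fun w => jet σ (k + 2) w ∘ p) z :=
    differentiableAt_pi.2 fun j => differentiableAt_pi.1 (hjet (k + 2) hz) (p j)
  exact Dzbar_det_crossGram_jet (hjet _ hz) (hcomp _)
end
end

section
/- Let σ : Ω → H be holomorphic and k ≥ 1, and set D_m(z) := det G_m(z) for m ≥ 0. Then for every z ∈ Ω, D_k(z)·(∂²D_k/∂z∂z̄)(z) − (∂D_k/∂z̄)(z)·(∂D_k/∂z)(z) = D_{k−1}(z)·D_{k+1}(z). Consequently, if σ is k-nondegenerate (so D_k(z) > 0 on Ω), the curvature of the determinant of the k-jet bundle satisfies ∂²(log D_k)/∂z∂z̄ (z) = D_{k−1}(z)·D_{k+1}(z)/D_k(z)² for every z ∈ Ω. -/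
open Matrix

noncomputable section

variable {H : Type*} [NormedAddCommGroup H] [InnerProductSpace ℂ H] [CompleteSpace H]

/-- `⟪x, y⟫` is the Mathlib inner product (conjugate-linear in the first argument);
it equals the paper's inner product `⟨y, x⟩`, which is linear in the first argument. -/
local notation "⟪" x ", " y "⟫" => (inner ℂ x y : ℂ)

/-! On an inner product of two holomorphic maps, `∂/∂z` acts on one factor and `∂/∂z̄` on the
other. By Jacobi's formula, `∂/∂z` therefore differentiates the columns of the Gram matrix of
`σ, σ′, …, σ⁽ᵏ⁾` one at a time; in all but the last column this produces a repeated column, so the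
only surviving term is the determinant in which the last column has order `k + 1` instead of `k`.
The same holds for `∂/∂z̄` and the rows. So `D_k`, `∂D_k`, `∂̄D_k` and `∂̄∂D_k` are the four minors
of `G_{k+1}` that omit one of the last two rows and one of the last two columns, and the identity is
the Desnanot–Jacobi identity for `G_{k+1}`. -/

open scoped Topology ComplexConjugate

section Determinants

variable {R : Type*} [CommRing R]

section Adjugate

variable {m n : Type*} [Fintype m] [DecidableEq m] [Fintype n] [DecidableEq n]

theorem trace_adjugate_mul_eq_sum_det_updateCol (M A : Matrix n n R) :
    (M.adjugate * A).trace = ∑ j, (M.updateCol j fun i => A i j).det := by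
  refine Finset.sum_congr rfl fun j _ => ?_
  rw [← cramer_apply, cramer_eq_adjugate_mulVec]
  rfl

theorem trace_adjugate_transpose_mul_transpose (M A : Matrix n n R) :
    (Mᵀ.adjugate * Aᵀ).trace = (M.adjugate * A).trace := by
  rw [← adjugate_transpose, ← transpose_mul, trace_transpose, trace_mul_comm]

theorem trace_adjugate_mul_eq_sum_det_updateRow (M A : Matrix n n R) :
    (M.adjugate * A).trace = ∑ i, (M.updateRow i (A i)).det := by
  rw [← trace_adjugate_transpose_mul_transpose, trace_adjugate_mul_eq_sum_det_updateCol]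
  refine Finset.sum_congr rfl fun i _ => ?_
  rw [← det_transpose, ← updateRow_transpose, transpose_transpose]
  rfl

theorem det_mul_det_toBlocks₂₂_adjugate (M : Matrix (m ⊕ n) (m ⊕ n) R) :
    M.det * M.adjugate.toBlocks₂₂.det = M.det ^ Fintype.card n * M.toBlocks₁₁.det := by
  set N := M.adjugate with hN
  have hblocks : fromBlocks (M.toBlocks₁₁ * N.toBlocks₁₁ + M.toBlocks₁₂ * N.toBlocks₂₁)
      (M.toBlocks₁₁ * N.toBlocks₁₂ + M.toBlocks₁₂ * N.toBlocks₂₂)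
      (M.toBlocks₂₁ * N.toBlocks₁₁ + M.toBlocks₂₂ * N.toBlocks₂₁)
      (M.toBlocks₂₁ * N.toBlocks₁₂ + M.toBlocks₂₂ * N.toBlocks₂₂) =
      fromBlocks (M.det • 1) 0 0 (M.det • 1) := by
    rw [← fromBlocks_multiply, fromBlocks_toBlocks, fromBlocks_toBlocks, hN, mul_adjugate,
      ← fromBlocks_one, fromBlocks_smul, smul_zero, smul_zero]
  obtain ⟨-, h₁₂, -, h₂₂⟩ := fromBlocks_inj.mp hblocks
  have hprod : M * fromBlocks 1 N.toBlocks₁₂ 0 N.toBlocks₂₂ =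
      fromBlocks M.toBlocks₁₁ 0 M.toBlocks₂₁ (M.det • 1) := by
    conv_lhs => rw [← fromBlocks_toBlocks M, fromBlocks_multiply, h₁₂, h₂₂]
    simp only [Matrix.mul_one, Matrix.mul_zero, add_zero]
  have hdet := congrArg det hprod
  rwa [det_mul, det_fromBlocks_zero₂₁, det_fromBlocks_zero₁₂, det_one, one_mul, det_smul, det_one,
    mul_one, mul_comm M.toBlocks₁₁.det] at hdet

/-- Jacobi's complementary minor formula. -/
theorem det_toBlocks₂₂_adjugate [Nonempty n] (M : Matrix (m ⊕ n) (m ⊕ n) R) :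
    M.adjugate.toBlocks₂₂.det = M.det ^ (Fintype.card n - 1) * M.toBlocks₁₁.det := by
  -- The identity is polynomial in the entries, so it suffices to prove it for the generic matrix,
  -- whose determinant can be cancelled.
  let X := mvPolynomialX (m ⊕ n) (m ⊕ n) ℤ
  have hX : X.adjugate.toBlocks₂₂.det = X.det ^ (Fintype.card n - 1) * X.toBlocks₁₁.det := by
    apply mul_left_cancel₀ (det_mvPolynomialX_ne_zero (m ⊕ n) ℤ)
    rw [det_mul_det_toBlocks₂₂_adjugate, ← mul_assoc, ← pow_succ',
      Nat.sub_add_cancel Fintype.card_pos]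
  let φ := MvPolynomial.aeval (R := ℤ) fun p : (m ⊕ n) × (m ⊕ n) => M p.1 p.2
  have hφ : φ.mapMatrix X = M := mvPolynomialX_mapMatrix_aeval ℤ M
  have h₁₁ : φ.mapMatrix X.toBlocks₁₁ = M.toBlocks₁₁ := congrArg toBlocks₁₁ hφ
  have h₂₂ : φ.mapMatrix X.adjugate.toBlocks₂₂ = M.adjugate.toBlocks₂₂ := by
    rw [← hφ, ← AlgHom.map_adjugate]
    rfl
  rw [← h₁₁, ← h₂₂, ← hφ, ← AlgHom.map_det, ← AlgHom.map_det, ← AlgHom.map_det, hX, map_mul,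
    map_pow]

end Adjugate

/-- The Desnanot–Jacobi identity. -/
theorem det_submatrix_castSucc_castSucc_mul_det {n : ℕ} (M : Matrix (Fin (n + 2)) (Fin (n + 2)) R) :
    (M.submatrix (Fin.castSucc ∘ Fin.castSucc) (Fin.castSucc ∘ Fin.castSucc)).det * M.det =
      (M.submatrix Fin.castSucc Fin.castSucc).det *
          (M.submatrix (Fin.last n).castSucc.succAbove (Fin.last n).castSucc.succAbove).det -
        (M.submatrix (Fin.last n).castSucc.succAbove Fin.castSucc).det *
          (M.submatrix Fin.castSucc (Fin.last n).castSucc.succAbove).det := by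
  have h := det_toBlocks₂₂_adjugate
    (M.submatrix (finSumFinEquiv (m := n) (n := 2)) finSumFinEquiv)
  have h₀ : finSumFinEquiv (Sum.inr (0 : Fin 2)) = (Fin.last n).castSucc := rfl
  have h₁ : finSumFinEquiv (Sum.inr (1 : Fin 2)) = Fin.last (n + 1) := rfl
  rw [adjugate_submatrix_equiv_self, det_submatrix_equiv_self, det_fin_two] at h
  simp only [toBlocks₂₂, of_apply, submatrix_apply, h₀, h₁, adjugate_fin_succ_eq_det_submatrix,
    Fin.succAbove_last, Fintype.card_fin] at h
  have hblock : (M.submatrix (finSumFinEquiv (m := n) (n := 2)) finSumFinEquiv).toBlocks₁₁ =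
      M.submatrix (Fin.castSucc ∘ Fin.castSucc) (Fin.castSucc ∘ Fin.castSucc) := rfl
  have heven (a : ℕ) : (-1 : R) ^ (a + a) = 1 := (Even.add_self a).neg_one_pow
  have hodd : (-1 : R) ^ (n + 1 + n) = -1 := Odd.neg_one_pow ⟨n, by ring⟩
  simp only [hblock, Fin.val_castSucc, Fin.val_last, heven, add_comm n (n + 1), hodd] at h
  linear_combination -h

end Determinants

/-- The real-linear map `v ↦ v • a + conj v • b`, which is the real derivative of a map with
Wirtinger derivatives `a` (in `z`) and `b` (in `z̄`). -/
def wirtingerCLM {E : Type*} [NormedAddCommGroup E] [NormedSpace ℂ E] (a b : E) : ℂ →L[ℝ] E :=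
  (ContinuousLinearMap.id ℝ ℂ).smulRight a + (Complex.conjCLE : ℂ →L[ℝ] ℂ).smulRight b

theorem wirtingerCLM_apply {E : Type*} [NormedAddCommGroup E] [NormedSpace ℂ E] (a b : E) (v : ℂ) :
    wirtingerCLM a b v = v • a + conj v • b :=
  rfl

/-- `g` is real-differentiable at `z` with Wirtinger derivatives `∂g/∂z = a` and `∂g/∂z̄ = b`. -/
def HasWirtingerAt {E : Type*} [NormedAddCommGroup E] [NormedSpace ℂ E] (g : ℂ → E) (a b : E)
    (z : ℂ) : Prop :=
  HasFDerivAt g (wirtingerCLM a b) z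

namespace HasWirtingerAt

section NormedSpace

variable {E F : Type*} [NormedAddCommGroup E] [NormedSpace ℂ E] [NormedAddCommGroup F]
  [NormedSpace ℂ F] {f : ℂ → ℂ} {g : ℂ → E} {a b z : ℂ} {c d : E}

theorem Dz_eq (h : HasWirtingerAt g c d z) : Dz g z = c := by
  rw [Dz, HasFDerivAt.fderiv h]
  simp only [wirtingerCLM_apply, map_one, Complex.conj_I, smul_add, smul_smul, mul_neg,
    Complex.I_mul_I]
  module

theorem Dzbar_eq (h : HasWirtingerAt g c d z) : Dzbar g z = d := by
  rw [Dzbar, HasFDerivAt.fderiv h]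
  simp only [wirtingerCLM_apply, map_one, Complex.conj_I, smul_add, smul_smul, mul_neg,
    Complex.I_mul_I]
  module

theorem Dzbar_Dz_eq {a b : ℂ → E} (hg : ∀ᶠ w in 𝓝 z, HasWirtingerAt g (a w) (b w) w)
    (ha : HasWirtingerAt a c d z) : Dzbar (fun w => Dz g w) z = d := by
  have hDz : (fun w => Dz g w) =ᶠ[𝓝 z] a := hg.mono fun w hw => hw.Dz_eq
  rw [← ha.Dzbar_eq, Dzbar, hDz.fderiv_eq, Dzbar]

theorem smul (hf : HasWirtingerAt f a b z) (hg : HasWirtingerAt g c d z) :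
    HasWirtingerAt (fun w => f w • g w) (f z • c + a • g z) (f z • d + b • g z) z := by
  refine (HasFDerivAt.fun_smul hf hg).congr_fderiv ?_
  ext v
  simp only [_root_.add_apply, _root_.smul_apply, wirtingerCLM_apply, smul_add,
    ContinuousLinearMap.smulRight_apply, smul_eq_mul]
  module

theorem comp_hasDerivAt {φ : ℂ → E} {φ' : E} (hφ : HasDerivAt φ φ' (f z))
    (hf : HasWirtingerAt f a b z) : HasWirtingerAt (fun w => φ (f w)) (a • φ') (b • φ') z := by
  refine ((hφ.hasFDerivAt.restrictScalars ℝ).comp z hf).congr_fderiv ?_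
  ext v
  simp only [ContinuousLinearMap.comp_apply, wirtingerCLM_apply, smul_eq_mul,
    ContinuousLinearMap.coe_restrictScalars', ContinuousLinearMap.toSpanSingleton_apply]
  module

theorem multilinear_comp {ι : Type*} [Fintype ι] [DecidableEq ι] {V : ι → Type*}
    [∀ i, NormedAddCommGroup (V i)] [∀ i, NormedSpace ℂ (V i)]
    (L : ContinuousMultilinearMap ℂ V F) {v : ∀ i, ℂ → V i} {a b : ∀ i, V i}
    (hv : ∀ i, HasWirtingerAt (v i) (a i) (b i) z) :
    HasWirtingerAt (fun w => L fun i => v i w)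
      (∑ i, L (Function.update (fun j => v j z) i (a i)))
      (∑ i, L (Function.update (fun j => v j z) i (b i))) z := by
  refine (HasFDerivAt.multilinear_comp (L.restrictScalars ℝ) hv).congr_fderiv ?_
  ext w
  simp only [_root_.sum_apply, ContinuousLinearMap.comp_apply, wirtingerCLM_apply,
    ContinuousMultilinearMap.toContinuousLinearMap_apply, ContinuousMultilinearMap.map_update_add,
    ContinuousMultilinearMap.coe_restrictScalars, ContinuousMultilinearMap.map_update_smul,
    Finset.sum_add_distrib, Finset.smul_sum]

theorem pi {ι : Type*} [Fintype ι] {v : ℂ → ι → E} {a b : ι → E}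
    (hv : ∀ i, HasWirtingerAt (fun w => v w i) (a i) (b i) z) : HasWirtingerAt v a b z := by
  refine (hasFDerivAt_pi.mpr hv).congr_fderiv ?_
  ext w i
  rfl

end NormedSpace

theorem inner {E : Type*} [NormedAddCommGroup E] [InnerProductSpace ℂ E] {f g : ℂ → E}
    {f' g' : E} {z : ℂ} (hf : HasDerivAt f f' z) (hg : HasDerivAt g g' z) :
    HasWirtingerAt (fun w => ⟪f w, g w⟫) ⟪f z, g'⟫ ⟪f', g z⟫ z := by
  have h := (hf.hasFDerivAt.restrictScalars ℝ).inner ℂ (hg.hasFDerivAt.restrictScalars ℝ)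
  refine h.congr_fderiv ?_
  ext
  simp [wirtingerCLM_apply, inner_smul_left, inner_smul_right]

/-- Jacobi's formula. -/
theorem det {n : Type*} [Fintype n] [DecidableEq n] {M : ℂ → Matrix n n ℂ} {A B : Matrix n n ℂ}
    {z : ℂ} (hM : ∀ i j, HasWirtingerAt (fun w => M w i j) (A i j) (B i j) z) :
    HasWirtingerAt (fun w => (M w).det) ((M z).adjugate * A).trace
      ((M z).adjugate * B).trace z := by
  rw [trace_adjugate_mul_eq_sum_det_updateRow, trace_adjugate_mul_eq_sum_det_updateRow]
  let L : ContinuousMultilinearMap ℂ (fun _ : n => n → ℂ) ℂ :=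
    { (detRowAlternating : (n → ℂ) [⋀^n]→ₗ[ℂ] ℂ).toMultilinearMap with
      cont := continuous_id.matrix_det }
  exact multilinear_comp L fun i => pi (hM i)

theorem Dzbar_Dz_log {f a b : ℂ → ℂ} {c d z : ℂ}
    (hf : ∀ᶠ w in 𝓝 z, HasWirtingerAt f (a w) (b w) w) (ha : HasWirtingerAt a c d z)
    (hz : f z ∈ Complex.slitPlane) :
    Dzbar (fun w => Dz (fun u => Complex.log (f u)) w) z = (f z * d - b z * a z) / f z ^ 2 := by
  have hfz := hf.self_of_nhds
  have hlog : ∀ᶠ w in 𝓝 z, HasWirtingerAt (fun u => Complex.log (f u))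
      (a w • (f w)⁻¹) (b w • (f w)⁻¹) w := by
    have hcont : ContinuousAt f z := HasFDerivAt.continuousAt hfz
    filter_upwards [hf, hcont (Complex.isOpen_slitPlane.mem_nhds hz)] with w hw hw'
    exact comp_hasDerivAt (Complex.hasDerivAt_log hw') hw
  have hne : f z ≠ 0 := Complex.slitPlane_ne_zero hz
  rw [Dzbar_Dz_eq hlog (ha.smul (comp_hasDerivAt (hasDerivAt_inv hne) hfz))]
  simp only [smul_eq_mul]
  field_simp
  ring

end HasWirtingerAt

theorem hasDerivAt_iteratedDeriv_of_contDiffAt {𝕜 F : Type*} [NontriviallyNormedField 𝕜]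
    [NormedAddCommGroup F] [NormedSpace 𝕜 F] {f : 𝕜 → F} {x : 𝕜} {n : WithTop ℕ∞} {m : ℕ}
    (hf : ContDiffAt 𝕜 n f x) (hm : m < n) :
    HasDerivAt (iteratedDeriv m f) (iteratedDeriv (m + 1) f x) x := by
  have hdiff : DifferentiableAt 𝕜 (iteratedDeriv m f) x := by
    rw [← iteratedDerivWithin_univ, ← differentiableWithinAt_univ]
    exact ContDiffWithinAt.differentiableWithinAt_iteratedDerivWithin hf hm (by simp)
  rw [iteratedDeriv_succ]
  exact hdiff.hasDerivAt

section JetGram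

/-- The orders `0, …, n - 1, n + 1`, that is, `0, …, n + 1` with `n` left out. -/
def skipOrders (n : ℕ) (i : Fin (n + 1)) : ℕ :=
  (Fin.last n).castSucc.succAbove i

theorem skipOrders_castSucc {n : ℕ} (i : Fin n) : skipOrders n i.castSucc = i := by
  simp [skipOrders]

theorem skipOrders_last (n : ℕ) : skipOrders n (Fin.last n) = n + 1 := by
  simp [skipOrders]

theorem trace_adjugate_mul_succ_rows {R : Type*} [CommRing R] {n : ℕ}
    (v : ℕ → Fin (n + 1) → R) :
    ((of fun i : Fin (n + 1) => v i).adjugate * of fun i : Fin (n + 1) => v (i + 1)).trace =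
      (of fun i => v (skipOrders n i)).det := by
  rw [trace_adjugate_mul_eq_sum_det_updateRow, Fin.sum_univ_castSucc, Finset.sum_eq_zero, zero_add]
  · congr 1
    ext i : 1
    refine Fin.lastCases ?_ (fun i => ?_) i
    · simp [skipOrders_last]
    · simp [skipOrders_castSucc, (Fin.castSucc_lt_last i).ne]
  · intro i _
    have hne : i.castSucc ≠ i.succ := i.castSucc_lt_succ.ne
    refine det_zero_of_row_eq hne ?_
    rw [updateRow_self, updateRow_ne hne.symm]
    rfl

variable {E : Type*} [NormedAddCommGroup E] [InnerProductSpace ℂ E]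

/-- The matrix of inner products of the derivatives of `σ` of orders `p i` with those of orders
`q j`. It generalizes the jet Gram matrix so as to contain the minors of the latter. -/
def jetGram {ι : Type*} (σ : ℂ → E) (p q : ι → ℕ) (z : ℂ) : Matrix ι ι ℂ :=
  of fun i j => ⟪iteratedDeriv (p i) σ z, iteratedDeriv (q j) σ z⟫

theorem hasWirtingerAt_det_jetGram {ι : Type*} [Fintype ι] [DecidableEq ι] {σ : ℂ → E} {z : ℂ}
    {n : WithTop ℕ∞} (hσ : ContDiffAt ℂ n σ z) {p q : ι → ℕ} (hp : ∀ i, p i < n)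
    (hq : ∀ j, q j < n) :
    HasWirtingerAt (fun w => (jetGram σ p q w).det)
      ((jetGram σ p q z).adjugate * jetGram σ p (fun j => q j + 1) z).trace
      ((jetGram σ p q z).adjugate * jetGram σ (fun i => p i + 1) q z).trace z :=
  .det fun i j =>
    .inner (hasDerivAt_iteratedDeriv_of_contDiffAt hσ (hp i))
      (hasDerivAt_iteratedDeriv_of_contDiffAt hσ (hq j))

variable {k : ℕ} (σ : ℂ → E) (z : ℂ)

theorem trace_adjugate_jetGram_mul_succ_left (q : Fin (k + 1) → ℕ) :
    ((jetGram σ Fin.val q z).adjugate * jetGram σ (fun i => i.val + 1) q z).trace =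
      (jetGram σ (skipOrders k) q z).det :=
  trace_adjugate_mul_succ_rows fun m j => ⟪iteratedDeriv m σ z, iteratedDeriv (q j) σ z⟫

theorem trace_adjugate_jetGram_mul_succ_right (p : Fin (k + 1) → ℕ) :
    ((jetGram σ p Fin.val z).adjugate * jetGram σ p (fun j => j.val + 1) z).trace =
      (jetGram σ p (skipOrders k) z).det := by
  rw [← trace_adjugate_transpose_mul_transpose, ← det_transpose]
  exact trace_adjugate_mul_succ_rows fun m i => ⟪iteratedDeriv (p i) σ z, iteratedDeriv m σ z⟫

theorem det_lG_mul_det_lG :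
    (lG σ k z).det * (lG σ (k + 2) z).det =
      (lG σ (k + 1) z).det * (jetGram σ (skipOrders k) (skipOrders k) z).det -
        (jetGram σ (skipOrders k) Fin.val z).det * (jetGram σ Fin.val (skipOrders k) z).det :=
  det_submatrix_castSucc_castSucc_mul_det (lG σ (k + 2) z)

variable {σ z}

open scoped ComplexOrder in
theorem det_lG_mem_slitPlane {N : ℕ}
    (h : LinearIndependent ℂ fun i : Fin N => iteratedDeriv i σ z) :
    (lG σ N z).det ∈ Complex.slitPlane :=
  .inl (Complex.pos_iff.mp (posDef_gram_of_linearIndependent h).det_pos).1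

theorem hasWirtingerAt_det_lG (hσ : ContDiffAt ℂ (k + 1) σ z) :
    HasWirtingerAt (fun w => (lG σ (k + 1) w).det) (jetGram σ Fin.val (skipOrders k) z).det
      (jetGram σ (skipOrders k) Fin.val z).det z := by
  have hlt (i : Fin (k + 1)) : ((i : ℕ) : WithTop ℕ∞) < k + 1 := by exact_mod_cast i.isLt
  rw [← trace_adjugate_jetGram_mul_succ_left, ← trace_adjugate_jetGram_mul_succ_right]
  exact hasWirtingerAt_det_jetGram hσ hlt hlt

theorem hasWirtingerAt_det_jetGram_skipOrders (hσ : ContDiffAt ℂ (k + 2) σ z) :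
    HasWirtingerAt (fun w => (jetGram σ Fin.val (skipOrders k) w).det)
      ((jetGram σ Fin.val (skipOrders k) z).adjugate *
        jetGram σ Fin.val (fun j => skipOrders k j + 1) z).trace
      (jetGram σ (skipOrders k) (skipOrders k) z).det z := by
  have hp (i : Fin (k + 1)) : ((i : ℕ) : WithTop ℕ∞) < k + 2 := by exact_mod_cast by omega
  have hq (i : Fin (k + 1)) : (skipOrders k i : WithTop ℕ∞) < k + 2 := by
    exact_mod_cast ((Fin.last k).castSucc.succAbove i).isLt
  rw [← trace_adjugate_jetGram_mul_succ_left]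
  exact hasWirtingerAt_det_jetGram hσ hp hq

end JetGram

theorem stmt5_general {E : Type*} [NormedAddCommGroup E] [InnerProductSpace ℂ E] {σ : ℂ → E}
    {z : ℂ} (k : ℕ) (hσ : ContDiffAt ℂ (k + 2) σ z) :
    ((lG σ (k + 1) z).det * Dzbar (fun w => Dz (fun u => (lG σ (k + 1) u).det) w) z -
        Dzbar (fun w => (lG σ (k + 1) w).det) z * Dz (fun w => (lG σ (k + 1) w).det) z =
      (lG σ k z).det * (lG σ (k + 2) z).det) ∧
    ((LinearIndependent ℂ fun i : Fin (k + 1) => iteratedDeriv (i : ℕ) σ z) →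
      Dzbar (fun w => Dz (fun u => Complex.log (lG σ (k + 1) u).det) w) z =
        (lG σ k z).det * (lG σ (k + 2) z).det / ((lG σ (k + 1) z).det) ^ 2) := by
  have hD : ∀ᶠ w in 𝓝 z, HasWirtingerAt (fun u => (lG σ (k + 1) u).det)
      (jetGram σ Fin.val (skipOrders k) w).det (jetGram σ (skipOrders k) Fin.val w).det w := by
    filter_upwards [hσ.eventually (by exact_mod_cast ENat.natCast_ne_coe_top (k + 2))] with w hw
    exact hasWirtingerAt_det_lG (hw.of_le (by gcongr; norm_num))
  have hDz := hasWirtingerAt_det_jetGram_skipOrders hσ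
  refine ⟨?_, fun hli => ?_⟩
  · rw [HasWirtingerAt.Dzbar_Dz_eq hD hDz, hD.self_of_nhds.Dzbar_eq, hD.self_of_nhds.Dz_eq,
      det_lG_mul_det_lG]
  · rw [HasWirtingerAt.Dzbar_Dz_log hD hDz (det_lG_mem_slitPlane hli), det_lG_mul_det_lG]

/-- With `D_m(z) := det G_m(z) = det (lG σ (m+1) z)` for a holomorphic `σ`:
`D_k·(∂²D_k/∂z∂z̄) − (∂D_k/∂z̄)·(∂D_k/∂z) = D_{k−1}·D_{k+1}` on `Ω`; consequently, if `σ` is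
`k`-nondegenerate, then `∂²(log D_k)/∂z∂z̄ = D_{k−1}·D_{k+1}/D_k²` on `Ω`. -/
theorem stmt5 (Ω : Set ℂ) (hΩ : IsOpen Ω) (σ : ℂ → H)
    (hσ : DifferentiableOn ℂ σ Ω) (k : ℕ) (hk : 1 ≤ k) :
    (∀ z ∈ Ω,
      (lG σ (k + 1) z).det * Dzbar (fun w => Dz (fun u => (lG σ (k + 1) u).det) w) z -
          Dzbar (fun w => (lG σ (k + 1) w).det) z * Dz (fun w => (lG σ (k + 1) w).det) z =
        (lG σ k z).det * (lG σ (k + 2) z).det) ∧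
    ((∀ z ∈ Ω, LinearIndependent ℂ fun i : Fin (k + 1) => iteratedDeriv (i : ℕ) σ z) →
      ∀ z ∈ Ω,
        Dzbar (fun w => Dz (fun u => Complex.log (lG σ (k + 1) u).det) w) z =
          (lG σ k z).det * (lG σ (k + 2) z).det / ((lG σ (k + 1) z).det) ^ 2) := by
  have hσ' : ∀ z ∈ Ω, ContDiffAt ℂ (k + 2) σ z := fun z hz =>
    (hσ.analyticAt (hΩ.mem_nhds hz)).contDiffAt
  exact ⟨fun z hz => (stmt5_general k (hσ' z hz)).1,
    fun hli z hz => (stmt5_general k (hσ' z hz)).2 (hli z hz)⟩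
end
end

section
/- Let H be a complex Hilbert space whose inner product ⟨·,·⟩ is linear in the first and conjugate-linear in the second argument, let Ω ⊆ ℂ^m be open, and let s_1,…,s_n : Ω → H be holomorphic with s_1(z),…,s_n(z) linearly independent for every z ∈ Ω; set h(z) := (⟨s_q(z), s_p(z)⟩)_{p,q=1}^n. For 1 ≤ i,j ≤ m let h_{ij}(z) be the n×n matrix whose (p,q) entry is the determinant of the (n+1)×(n+1) matrix whose (a,b) entry is ⟨u_b, v_a⟩, where (u_1,…,u_{n+1}) = (s_1(z),…,s_n(z), ∂s_q/∂z_i(z)) and (v_1,…,v_{n+1}) = (s_1(z),…,s_n(z), ∂s_p/∂z_j(z)). Then for all 1 ≤ i,j ≤ m and z ∈ Ω, ∂²h/∂z̄_j∂z_i (z) − (∂h/∂z̄_j)(z)·h(z)⁻¹·(∂h/∂z_i)(z) = (det h(z))⁻¹ · h_{ij}(z); that is, the curvature of the bundle spanned by the frame is 𝒦(z) = (det h(z))⁻¹ h(z)⁻¹ Σ_{i,j=1}^m h_{ij}(z) dz̄_j∧dz_i. -/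
open Matrix

noncomputable section

/-- Wirtinger derivative `∂g/∂z_i := (1/2)(∂g/∂x_i − i·∂g/∂y_i)` in the `i`-th coordinate of
`ℂ^m`, for `g` with values in a complex Banach space. -/
def DzV {m : ℕ} {E : Type*} [NormedAddCommGroup E] [NormedSpace ℂ E]
    (i : Fin m) (g : (Fin m → ℂ) → E) (z : Fin m → ℂ) : E :=
  (1 / 2 : ℂ) • (fderiv ℝ g z (Pi.single i 1) -
    Complex.I • fderiv ℝ g z (Pi.single i Complex.I))

/-- Wirtinger derivative `∂g/∂z̄_i := (1/2)(∂g/∂x_i + i·∂g/∂y_i)`. -/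
def DzbarV {m : ℕ} {E : Type*} [NormedAddCommGroup E] [NormedSpace ℂ E]
    (i : Fin m) (g : (Fin m → ℂ) → E) (z : Fin m → ℂ) : E :=
  (1 / 2 : ℂ) • (fderiv ℝ g z (Pi.single i 1) +
    Complex.I • fderiv ℝ g z (Pi.single i Complex.I))

variable {H : Type*} [NormedAddCommGroup H] [InnerProductSpace ℂ H] [CompleteSpace H]

local notation "⟪" x ", " y "⟫" => (inner ℂ x y : ℂ)

/-- The metric `h(z) = (⟨s_q(z),s_p(z)⟩_paper)_{p,q} = (⟪s_p(z),s_q(z)⟫)_{p,q}`. -/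
def fGramV {m n : ℕ} (s : Fin n → (Fin m → ℂ) → H) (z : Fin m → ℂ) :
    Matrix (Fin n) (Fin n) ℂ :=
  Matrix.of fun p q => ⟪s p z, s q z⟫

/-- The paper's matrix `h_{ij}(z)`: its `(p,q)` entry is the determinant of the
`(n+1)×(n+1)` matrix whose `(a,b)` entry is `⟨u_b, v_a⟩_paper = ⟪v_a, u_b⟫`, where
`u = (s_1(z),…,s_n(z), ∂s_q/∂z_i(z))` and `v = (s_1(z),…,s_n(z), ∂s_p/∂z_j(z))`. -/
def hMatV {m n : ℕ} (s : Fin n → (Fin m → ℂ) → H) (i j : Fin m) (z : Fin m → ℂ) :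
    Matrix (Fin n) (Fin n) ℂ :=
  Matrix.of fun p q =>
    (Matrix.of fun a b : Fin n ⊕ Unit =>
      ⟪Sum.elim (fun r => s r z) (fun _ => DzV j (s p) z) a,
        Sum.elim (fun r => s r z) (fun _ => DzV i (s q) z) b⟫).det

/-! On holomorphic functions `∂/∂z_i` passes to the second slot of the inner product and `∂/∂z̄_j`
to the first, so the three matrices of derivatives have entries `⟪s_p, ∂_i s_q⟫`, `⟪∂_j s_p, s_q⟫`
and `⟪∂_j s_p, ∂_i s_q⟫`. The left-hand side is then, entry by entry, the Schur complement of the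
Gram matrix `h` in the bordered Gram matrix whose determinant is the entry of `h_{ij}`.

The mixed derivative needs `∂_i s_q` to be holomorphic again: near every point it is the uniform
limit of difference quotients, and uniform limits of holomorphic functions on an open subset of a
normed space are holomorphic by Cauchy's estimate. -/

open Filter Metric Set Topology

theorem exists_thickening_ball_subset {X : Type*} [PseudoMetricSpace X] {U : Set X} {c : X}
    (hU : U ∈ 𝓝 c) : ∃ r > 0, thickening r (ball c r) ⊆ U := by
  obtain ⟨R, hR, hRU⟩ := Metric.mem_nhds_iff.1 hU
  refine ⟨R / 2, half_pos hR, Subset.trans ?_ hRU⟩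
  simpa only [add_halves] using thickening_ball (x := c) (R / 2) (R / 2)

theorem eventually_smul_mem_ball (𝕜 : Type*) {E : Type*} [NormedField 𝕜] [SeminormedAddCommGroup E]
    [NormedSpace 𝕜 E] {r : ℝ} (hr : 0 < r) (v : E) : ∀ᶠ t : 𝕜 in 𝓝 0, t • v ∈ ball 0 r :=
  ContinuousAt.eventually_mem (by fun_prop) (by simpa only [zero_smul] using ball_mem_nhds 0 hr)

section Holomorphic

variable {E F : Type*} [NormedAddCommGroup E] [NormedSpace ℂ E]
  [NormedAddCommGroup F] [NormedSpace ℂ F]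

theorem norm_fderiv_le_of_forall_mem_ball_norm_le {f : E → F} {c : E} {r M : ℝ} (hr : 0 < r)
    (hf : DifferentiableOn ℂ f (ball c r)) (hM : ∀ y ∈ ball c r, ‖f y‖ ≤ M) :
    ‖fderiv ℂ f c‖ ≤ 2 * M / r := by
  refine Complex.norm_fderiv_le_div_of_mapsTo_ball hf (fun y hy => ?_) hr
  rw [mem_closedBall, dist_eq_norm]
  linarith [norm_sub_le (f y) (f c), hM y hy, hM c (mem_ball_self hr)]

theorem norm_sub_sub_fderiv_le_of_forall_mem_ball_norm_le {f : E → F} {c : E} {r M : ℝ}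
    (hf : DifferentiableOn ℂ f (ball c r)) (hM : ∀ y ∈ ball c r, ‖f y‖ ≤ M) {y : E}
    (hy : y ∈ ball c r) :
    ‖f y - f c - fderiv ℂ f c (y - c)‖ ≤ 4 * M * (‖y - c‖ / r) ^ 2 := by
  have hr : 0 < r := nonempty_ball.1 ⟨y, hy⟩
  have hfc : HasFDerivAt f (fderiv ℂ f c) c :=
    (hf.differentiableAt (ball_mem_nhds c hr)).hasFDerivAt
  set R : E → F := fun x => f x - f c - fderiv ℂ f c (x - c) with hR
  have hRc : R c = 0 := by simp only [hR, sub_self, map_zero]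
  have hRd : DifferentiableOn ℂ R (ball c r) := by fun_prop
  have hRM : MapsTo R (ball c r) (closedBall (R c) (4 * M)) := by
    intro x hx
    have hlin : ‖fderiv ℂ f c (x - c)‖ ≤ 2 * M := calc
      _ ≤ ‖fderiv ℂ f c‖ * ‖x - c‖ := ContinuousLinearMap.le_opNorm _ _
      _ ≤ 2 * M / r * r := by
        have hxr : ‖x - c‖ ≤ r := (mem_ball_iff_norm.1 hx).le
        have hcauchy := norm_fderiv_le_of_forall_mem_ball_norm_le hr hf hM
        have hnonneg : 0 ≤ 2 * M / r := (norm_nonneg _).trans hcauchy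
        gcongr
      _ = 2 * M := div_mul_cancel₀ _ hr.ne'
    rw [hRc, mem_closedBall_zero_iff]
    linarith [norm_sub_le (f x - f c) (fderiv ℂ f c (x - c)), norm_sub_le (f x) (f c), hM x hx,
      hM c (mem_ball_self hr)]
  have hRo : (R · - R c) =o[𝓝 c] fun x => ‖x - c‖ ^ 1 := by
    simpa only [hRc, sub_zero, pow_one] using hfc.isLittleO.norm_right
  have hschwarz := Complex.dist_le_mul_div_pow_of_mapsTo_ball_of_isLittleO hRd hRM hRo hy
  rwa [hRc, dist_zero_right, dist_eq_norm] at hschwarz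

theorem uniformCauchySeqOn_fderiv_of_thickening {ι : Type*} {l : Filter ι} {f : ι → E → F}
    {s : Set E} {δ : ℝ} (hδ : 0 < δ) (hf : ∀ᶠ n in l, DifferentiableOn ℂ (f n) (thickening δ s))
    (hcauchy : UniformCauchySeqOn f l (thickening δ s)) :
    UniformCauchySeqOn (fun n => fderiv ℂ (f n)) l s := by
  intro u hu
  obtain ⟨ε, hε, hεu⟩ := mem_uniformity_dist.1 hu
  filter_upwards [hcauchy _ (dist_mem_uniformity (show 0 < ε * δ / 4 by positivity)),
    hf.prod_mk hf] with n hn hdiff x hx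
  have hball : ball x δ ⊆ thickening δ s := ball_subset_thickening hx δ
  have hdiff₁ := hdiff.1.mono hball
  have hdiff₂ := hdiff.2.mono hball
  have hsub : fderiv ℂ (f n.1 - f n.2) x = fderiv ℂ (f n.1) x - fderiv ℂ (f n.2) x :=
    fderiv_sub (hdiff₁.differentiableAt (ball_mem_nhds x hδ))
      (hdiff₂.differentiableAt (ball_mem_nhds x hδ))
  refine hεu ?_
  calc dist (fderiv ℂ (f n.1) x) (fderiv ℂ (f n.2) x)
      = ‖fderiv ℂ (f n.1 - f n.2) x‖ := by rw [hsub, dist_eq_norm]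
    _ ≤ 2 * (ε * δ / 4) / δ :=
      norm_fderiv_le_of_forall_mem_ball_norm_le hδ (hdiff₁.sub hdiff₂) fun y hy => by
        rw [Pi.sub_apply, ← dist_eq_norm]
        exact (hn y (hball hy)).le
    _ = ε / 2 := by field_simp; norm_num
    _ < ε := half_lt_self hε

theorem differentiableOn_of_tendstoUniformlyOn [CompleteSpace F] {ι : Type*} {l : Filter ι}
    [l.NeBot] {f : ι → E → F} {g : E → F} {U : Set E} (hU : IsOpen U)
    (hf : ∀ᶠ n in l, DifferentiableOn ℂ (f n) U) (hfg : TendstoUniformlyOn f g l U) :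
    DifferentiableOn ℂ g U := by
  intro c hc
  obtain ⟨r, hr, hrU⟩ := exists_thickening_ball_subset (hU.mem_nhds hc)
  have hcauchy : UniformCauchySeqOn (fun n => fderiv ℂ (f n)) l (ball c r) :=
    uniformCauchySeqOn_fderiv_of_thickening hr (hf.mono fun n hn => hn.mono hrU)
      (hfg.mono hrU).uniformCauchySeqOn
  choose! g' hg' using fun x (hx : x ∈ ball c r) =>
    CompleteSpace.complete (hcauchy.cauchy_map hx)
  have hderiv : HasFDerivAt g (g' c) c := by
    refine hasFDerivAt_of_tendstoUniformlyOnFilter (f := f)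
      ((hcauchy.tendstoUniformlyOn_of_tendsto hg').tendstoUniformlyOnFilter.mono_right
        (le_principal_iff.2 (ball_mem_nhds c hr))) ?_ ?_
    · filter_upwards [hf.prod_mk (hU.mem_nhds hc)] with p hp
      exact (hp.1.differentiableAt (hU.mem_nhds hp.2)).hasFDerivAt
    · filter_upwards [hU.mem_nhds hc] with y hy using hfg.tendsto_at hy
  exact hderiv.differentiableAt.differentiableWithinAt

theorem norm_differenceQuotient_sub_fderiv_le {f : E → F} {c v : E} {r M : ℝ} {t : ℂ}
    (hf : DifferentiableOn ℂ f (ball c r)) (hM : ∀ y ∈ ball c r, ‖f y‖ ≤ M) (ht : t ≠ 0)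
    (htv : t • v ∈ ball 0 r) :
    ‖t⁻¹ • (f (c + t • v) - f c) - fderiv ℂ f c v‖ ≤ 4 * M * (‖v‖ / r) ^ 2 * ‖t‖ := by
  have htaylor : ‖f (c + t • v) - f c - t • fderiv ℂ f c v‖ ≤ 4 * M * (‖t • v‖ / r) ^ 2 := by
    simpa only [add_sub_cancel_left, map_smul] using
      norm_sub_sub_fderiv_le_of_forall_mem_ball_norm_le hf hM (y := c + t • v) (by simpa using htv)
  calc ‖t⁻¹ • (f (c + t • v) - f c) - fderiv ℂ f c v‖
      = ‖t⁻¹ • (f (c + t • v) - f c - t • fderiv ℂ f c v)‖ := by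
        rw [smul_sub t⁻¹ _ (t • _), inv_smul_smul₀ ht]
    _ ≤ ‖t‖⁻¹ * (4 * M * (‖t • v‖ / r) ^ 2) := by
        rw [norm_smul, norm_inv]
        gcongr
    _ = 4 * M * (‖v‖ / r) ^ 2 * ‖t‖ := by
        have ht_norm : ‖t‖ ≠ 0 := norm_ne_zero_iff.2 ht
        rw [norm_smul]
        field_simp

theorem tendstoUniformlyOn_differenceQuotient {f : E → F} {s : Set E} {δ M : ℝ} (hδ : 0 < δ)
    (hf : DifferentiableOn ℂ f (thickening δ s)) (hM : ∀ y ∈ thickening δ s, ‖f y‖ ≤ M) (v : E) :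
    TendstoUniformlyOn (fun (t : ℂ) w => t⁻¹ • (f (w + t • v) - f w)) (fun w => fderiv ℂ f w v)
      (𝓝[≠] 0) s := by
  rw [Metric.tendstoUniformlyOn_iff]
  intro ε hε
  have hbound : ∀ᶠ t : ℂ in 𝓝 0, 4 * M * (‖v‖ / δ) ^ 2 * ‖t‖ < ε :=
    ContinuousAt.eventually_lt (by fun_prop) continuousAt_const (by simpa using hε)
  filter_upwards [self_mem_nhdsWithin,
    nhdsWithin_le_nhds (eventually_smul_mem_ball ℂ hδ v), nhdsWithin_le_nhds hbound]
    with t ht htv htε w hw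
  rw [dist_comm, dist_eq_norm]
  have hball : ball w δ ⊆ thickening δ s := ball_subset_thickening hw δ
  exact (norm_differenceQuotient_sub_fderiv_le (hf.mono hball) (fun y hy => hM y (hball hy)) ht
    htv).trans_lt htε

theorem differentiableOn_fderiv_apply [CompleteSpace F] {f : E → F} {U : Set E} (hU : IsOpen U)
    (hf : DifferentiableOn ℂ f U) (v : E) : DifferentiableOn ℂ (fun w => fderiv ℂ f w v) U := by
  intro c hc
  have hbound : ∀ᶠ y in 𝓝 c, ‖f y‖ < ‖f c‖ + 1 :=
    (hf.continuousOn.continuousAt (hU.mem_nhds hc)).norm.eventually_lt continuousAt_const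
      (lt_add_one _)
  obtain ⟨r, hr, hr_sub⟩ := exists_thickening_ball_subset (inter_mem (hU.mem_nhds hc) hbound)
  have hrU : thickening r (ball c r) ⊆ U := fun y hy => (hr_sub hy).1
  have hM : ∀ y ∈ thickening r (ball c r), ‖f y‖ ≤ ‖f c‖ + 1 := fun y hy => (hr_sub hy).2.le
  have hquot : ∀ᶠ t : ℂ in 𝓝[≠] 0,
      DifferentiableOn ℂ (fun w => t⁻¹ • (f (w + t • v) - f w)) (ball c r) := by
    filter_upwards [nhdsWithin_le_nhds (eventually_smul_mem_ball ℂ hr v)] with t ht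
    have hshift : MapsTo (· + t • v) (ball c r) U := fun w hw =>
      hrU (ball_subset_thickening hw r (by simpa using ht))
    have hself : ball c r ⊆ U := (self_subset_thickening hr _).trans hrU
    exact ((hf.comp (by fun_prop) hshift).sub (hf.mono hself)).const_smul t⁻¹
  exact ((differentiableOn_of_tendstoUniformlyOn isOpen_ball hquot
    (tendstoUniformlyOn_differenceQuotient hr (hf.mono hrU) hM v)).differentiableAt
      (ball_mem_nhds c hr)).differentiableWithinAt

end Holomorphic

section Wirtinger

variable {m : ℕ} {z : Fin m → ℂ} {E : Type*} [NormedAddCommGroup E] [NormedSpace ℂ E]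
  {K : Type*} [NormedAddCommGroup K] [InnerProductSpace ℂ K]

theorem fderiv_real_single_I {g : (Fin m → ℂ) → E} (hg : DifferentiableAt ℂ g z) (i : Fin m) :
    fderiv ℝ g z (Pi.single i Complex.I) = Complex.I • fderiv ℝ g z (Pi.single i 1) := by
  rw [hg.fderiv_restrictScalars ℝ, ContinuousLinearMap.coe_restrictScalars', ← map_smul,
    ← Pi.single_smul, smul_eq_mul, mul_one]

theorem DzV_eq_fderiv {g : (Fin m → ℂ) → E} (hg : DifferentiableAt ℂ g z) (i : Fin m) :
    DzV i g z = fderiv ℂ g z (Pi.single i 1) := by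
  rw [DzV, fderiv_real_single_I hg, hg.fderiv_restrictScalars ℝ,
    ContinuousLinearMap.coe_restrictScalars', smul_smul, Complex.I_mul_I]
  module

theorem DzbarV_eq_zero {g : (Fin m → ℂ) → E} (hg : DifferentiableAt ℂ g z) (i : Fin m) :
    DzbarV i g z = 0 := by
  rw [DzbarV, fderiv_real_single_I hg, smul_smul, Complex.I_mul_I, neg_one_smul, add_neg_cancel,
    smul_zero]

theorem DzV_inner {f g : (Fin m → ℂ) → K} (hf : DifferentiableAt ℝ f z)
    (hg : DifferentiableAt ℝ g z) (i : Fin m) :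
    DzV i (fun w => ⟪f w, g w⟫) z = ⟪f z, DzV i g z⟫ + ⟪DzbarV i f z, g z⟫ := by
  simp only [DzV, DzbarV, fderiv_inner_apply ℂ hf hg, inner_smul_left, inner_smul_right,
    inner_add_left, inner_sub_right, smul_eq_mul, map_div₀, map_one, map_ofNat, Complex.conj_I]
  ring

theorem DzbarV_inner {f g : (Fin m → ℂ) → K} (hf : DifferentiableAt ℝ f z)
    (hg : DifferentiableAt ℝ g z) (i : Fin m) :
    DzbarV i (fun w => ⟪f w, g w⟫) z = ⟪f z, DzbarV i g z⟫ + ⟪DzV i f z, g z⟫ := by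
  simp only [DzV, DzbarV, fderiv_inner_apply ℂ hf hg, inner_smul_left, inner_smul_right,
    inner_sub_left, inner_add_right, smul_eq_mul, map_div₀, map_one, map_ofNat, Complex.conj_I]
  ring

theorem DzV_inner_of_differentiableAt {f g : (Fin m → ℂ) → K} (hf : DifferentiableAt ℂ f z)
    (hg : DifferentiableAt ℝ g z) (i : Fin m) :
    DzV i (fun w => ⟪f w, g w⟫) z = ⟪f z, DzV i g z⟫ := by
  rw [DzV_inner (hf.restrictScalars ℝ) hg, DzbarV_eq_zero hf, inner_zero_left, add_zero]

theorem DzbarV_inner_of_differentiableAt {f g : (Fin m → ℂ) → K} (hf : DifferentiableAt ℝ f z)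
    (hg : DifferentiableAt ℂ g z) (i : Fin m) :
    DzbarV i (fun w => ⟪f w, g w⟫) z = ⟪DzV i f z, g z⟫ := by
  rw [DzbarV_inner hf (hg.restrictScalars ℝ), DzbarV_eq_zero hg, inner_zero_right, zero_add]

theorem differentiableOn_DzV [CompleteSpace E] {Ω : Set (Fin m → ℂ)} (hΩ : IsOpen Ω)
    {g : (Fin m → ℂ) → E} (hg : DifferentiableOn ℂ g Ω) (i : Fin m) :
    DifferentiableOn ℂ (DzV i g) Ω :=
  (differentiableOn_fderiv_apply hΩ hg (Pi.single i 1)).congr fun _ hw =>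
    DzV_eq_fderiv (hg.differentiableAt (hΩ.mem_nhds hw)) i

theorem DzV_continuousLinearMap_comp {G : Type*} [NormedAddCommGroup G] [NormedSpace ℂ G]
    {g : (Fin m → ℂ) → E} (hg : DifferentiableAt ℝ g z) (L : E →L[ℂ] G) (i : Fin m) :
    DzV i (fun w => L (g w)) z = L (DzV i g z) := by
  have hLg : fderiv ℝ (fun w => L (g w)) z = (L.restrictScalars ℝ).comp (fderiv ℝ g z) :=
    ((L.restrictScalars ℝ).hasFDerivAt.comp z hg.hasFDerivAt).fderiv
  simp only [DzV, hLg, ContinuousLinearMap.comp_apply, ContinuousLinearMap.coe_restrictScalars',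
    map_smul, map_sub]

theorem DzbarV_DzV_inner_of_completeSpace [CompleteSpace K] {Ω : Set (Fin m → ℂ)} (hΩ : IsOpen Ω)
    {f g : (Fin m → ℂ) → K} (hf : DifferentiableOn ℂ f Ω) (hg : DifferentiableOn ℂ g Ω)
    (hz : z ∈ Ω) (i j : Fin m) :
    DzbarV j (fun w => DzV i (fun u => ⟪f u, g u⟫) w) z = ⟪DzV j f z, DzV i g z⟫ := by
  have hfd : ∀ w ∈ Ω, DifferentiableAt ℂ f w := fun w hw => hf.differentiableAt (hΩ.mem_nhds hw)
  have hgd : ∀ w ∈ Ω, DifferentiableAt ℂ g w := fun w hw => hg.differentiableAt (hΩ.mem_nhds hw)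
  have hDg : DifferentiableAt ℂ (DzV i g) z :=
    (differentiableOn_DzV hΩ hg i).differentiableAt (hΩ.mem_nhds hz)
  have hfirst : (fun w => DzV i (fun u => ⟪f u, g u⟫) w) =ᶠ[𝓝 z] fun w => ⟪f w, DzV i g w⟫ := by
    filter_upwards [hΩ.mem_nhds hz] with w hw
    exact DzV_inner_of_differentiableAt (hfd w hw) ((hgd w hw).restrictScalars ℝ) i
  calc DzbarV j (fun w => DzV i (fun u => ⟪f u, g u⟫) w) z
      = DzbarV j (fun w => ⟪f w, DzV i g w⟫) z := by rw [DzbarV, DzbarV, hfirst.fderiv_eq]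
    _ = ⟪DzV j f z, DzV i g z⟫ :=
      DzbarV_inner_of_differentiableAt ((hfd z hz).restrictScalars ℝ) hDg j

-- Without completeness `DzV i g` need only be differentiable as a map into the completion of `K`.
theorem DzbarV_DzV_inner {Ω : Set (Fin m → ℂ)} (hΩ : IsOpen Ω) {f g : (Fin m → ℂ) → K}
    (hf : DifferentiableOn ℂ f Ω) (hg : DifferentiableOn ℂ g Ω) (hz : z ∈ Ω) (i j : Fin m) :
    DzbarV j (fun w => DzV i (fun u => ⟪f u, g u⟫) w) z = ⟪DzV j f z, DzV i g z⟫ := by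
  let ι : K →L[ℂ] UniformSpace.Completion K := UniformSpace.Completion.toComplL
  have hι : ∀ x y : K, ⟪ι x, ι y⟫ = ⟪x, y⟫ := UniformSpace.Completion.inner_coe
  have hfz := (hf.differentiableAt (hΩ.mem_nhds hz)).restrictScalars ℝ
  have hgz := (hg.differentiableAt (hΩ.mem_nhds hz)).restrictScalars ℝ
  have hcompl := DzbarV_DzV_inner_of_completeSpace hΩ (ι.differentiable.comp_differentiableOn hf)
    (ι.differentiable.comp_differentiableOn hg) hz i j
  simpa only [Function.comp_def, hι, DzV_continuousLinearMap_comp hfz,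
    DzV_continuousLinearMap_comp hgz] using hcompl

end Wirtinger

theorem det_gram_bordered {𝕜 K ι : Type*} [RCLike 𝕜] [NormedAddCommGroup K]
    [InnerProductSpace 𝕜 K] [Fintype ι] [DecidableEq ι] {v : ι → K}
    (hv : LinearIndependent 𝕜 v) (x y : K) :
    (Matrix.of fun a b : ι ⊕ Unit =>
      inner 𝕜 (Sum.elim v (fun _ => x) a) (Sum.elim v (fun _ => y) b)).det =
      (gram 𝕜 v).det * (inner 𝕜 x y -
        ((fun k => inner 𝕜 x (v k)) ᵥ* (gram 𝕜 v)⁻¹) ⬝ᵥ fun k => inner 𝕜 (v k) y) := by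
  let := invertibleOfIsUnitDet (gram 𝕜 v) (det_gram_ne_zero_iff_linearIndependent.2 hv).isUnit
  have hblock : (Matrix.of fun a b : ι ⊕ Unit =>
      inner 𝕜 (Sum.elim v (fun _ => x) a) (Sum.elim v (fun _ => y) b)) =
      fromBlocks (gram 𝕜 v) (replicateCol Unit fun k => inner 𝕜 (v k) y)
        (replicateRow Unit fun k => inner 𝕜 x (v k)) (Matrix.of fun _ _ => inner 𝕜 x y) := by
    ext (a | a) (b | b) <;> rfl
  rw [hblock, det_fromBlocks₁₁, det_unique (n := Unit), invOf_eq_nonsing_inv]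
  rfl

theorem stmt10_general {m n : ℕ} {K : Type*} [NormedAddCommGroup K] [InnerProductSpace ℂ K]
    {Ω : Set (Fin m → ℂ)} (hΩ : IsOpen Ω) {s : Fin n → (Fin m → ℂ) → K}
    (hs : ∀ p, DifferentiableOn ℂ (s p) Ω) {z : Fin m → ℂ} (hz : z ∈ Ω)
    (hlin : LinearIndependent ℂ fun p => s p z) (i j : Fin m) :
    (Matrix.of fun p q : Fin n =>
        DzbarV j (fun w => DzV i (fun u => fGramV s u p q) w) z) -
      (Matrix.of fun p q : Fin n => DzbarV j (fun w => fGramV s w p q) z) *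
        (fGramV s z)⁻¹ *
        (Matrix.of fun p q : Fin n => DzV i (fun w => fGramV s w p q) z) =
    ((fGramV s z).det)⁻¹ • hMatV s i j z := by
  have hd : ∀ p, DifferentiableAt ℂ (s p) z := fun p => (hs p).differentiableAt (hΩ.mem_nhds hz)
  have hdR : ∀ p, DifferentiableAt ℝ (s p) z := fun p => (hd p).restrictScalars ℝ
  have hDz : ∀ p q, DzV i (fun w => fGramV s w p q) z = ⟪s p z, DzV i (s q) z⟫ := fun p q =>
    DzV_inner_of_differentiableAt (hd p) (hdR q) i
  have hDzbar : ∀ p q, DzbarV j (fun w => fGramV s w p q) z = ⟪DzV j (s p) z, s q z⟫ :=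
    fun p q => DzbarV_inner_of_differentiableAt (hdR p) (hd q) j
  have hDzbarDz : ∀ p q, DzbarV j (fun w => DzV i (fun u => fGramV s u p q) w) z =
      ⟪DzV j (s p) z, DzV i (s q) z⟫ := fun p q => DzbarV_DzV_inner hΩ (hs p) (hs q) hz i j
  have hdet : (fGramV s z).det ≠ 0 := det_gram_ne_zero_iff_linearIndependent.2 hlin
  ext p q
  rw [Matrix.smul_apply, hMatV, Matrix.of_apply, det_gram_bordered hlin, smul_eq_mul]
  simp only [hDz, hDzbar, hDzbarDz]
  exact (inv_mul_cancel_left₀ hdet _).symm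

/-- Curvature formula in several variables: for a holomorphic frame `s_1,…,s_n` on an open
`Ω ⊆ ℂ^m`, pointwise linearly independent, with metric `h`,
`∂²h/∂z̄_j∂z_i − (∂h/∂z̄_j)·h⁻¹·(∂h/∂z_i) = (det h)⁻¹·h_{ij}` on `Ω`. -/
theorem stmt10 {m n : ℕ} (Ω : Set (Fin m → ℂ)) (hΩ : IsOpen Ω)
    (s : Fin n → (Fin m → ℂ) → H) (hs : ∀ p, DifferentiableOn ℂ (s p) Ω)
    (hnd : ∀ z ∈ Ω, LinearIndependent ℂ fun p => s p z) :
    ∀ i j : Fin m, ∀ z ∈ Ω,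
      (Matrix.of fun p q : Fin n =>
          DzbarV j (fun w => DzV i (fun u => fGramV s u p q) w) z) -
        (Matrix.of fun p q : Fin n => DzbarV j (fun w => fGramV s w p q) z) *
          (fGramV s z)⁻¹ *
          (Matrix.of fun p q : Fin n => DzV i (fun w => fGramV s w p q) z) =
      ((fGramV s z).det)⁻¹ • hMatV s i j z :=
  fun i j _ hz => stmt10_general hΩ hs hz (hnd _ hz) i j
end
end
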